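/- If ξ = (E, B, F, p) is a fibre bundle whose base space B is paracompact and Hausdorff, then the projection p : E → B is a fibration. -/

import Mathlib

/-!
STATEMENT 1: If `ξ = (E, B, F, p)` is a fibre bundle whose base `B` is paracompact and
Hausdorff, then the projection `p : E → B` is a fibration.
-/

open unitInterval ContinuousMap

universe u v

noncomputable section

/-- Homotopy lifting property of `p` with respect to `Y`. -/
def HasHLP {E B : Type*} [TopologicalSpace E] [TopologicalSpace B]
    (p : C(E, B)) (Y : Type*) [TopologicalSpace Y] : Prop :=
  ∀ (f : C(Y, E)) (h : C(Y × unitInterval, B)),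
    (∀ y, h (y, 0) = p (f y)) →
    ∃ h' : C(Y × unitInterval, E),
      (∀ z, p (h' z) = h z) ∧ (∀ y, h' (y, 0) = f y)

/-- A (Hurewicz) fibration: HLP with respect to every topological space. -/
def IsFibration {E B : Type*} [TopologicalSpace E] [TopologicalSpace B] (p : C(E, B)) : Prop :=
  ∀ (Y : Type v) [TopologicalSpace Y], HasHLP p Y

/-- `p : E → B` is the projection of a fibre bundle with fibre `F`: it is locally
trivial, i.e. every point of `B` has an open neighbourhood `U` admitting a homeomorphism
`φ : U × F ≃ p⁻¹(U)` with `p (φ (b, x)) = b`. -/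
def IsFibreBundleProj (F : Type*) [TopologicalSpace F] {E B : Type*}
    [TopologicalSpace E] [TopologicalSpace B] (p : C(E, B)) : Prop :=
  ∀ b : B, ∃ U : Set B, IsOpen U ∧ b ∈ U ∧
    ∃ φ : (U × F) ≃ₜ (p ⁻¹' U : Set E), ∀ (u : U) (x : F), p (φ (u, x)) = (u : B)

open Set Topology

/-- The minimum over the unit interval of a continuous function, depending on a parameter. -/
lemma exists_min_param {Z : Type*} [TopologicalSpace Z] (f : C(Z × unitInterval, ℝ)) :
    ∃ m : C(Z, ℝ), (∀ z u, m z ≤ f (z, u)) ∧ ∀ z, ∃ u, m z = f (z, u) := by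
  have hc : Continuous fun z => sInf ((fun u => f (z, u)) '' (univ : Set unitInterval)) :=
    isCompact_univ.continuous_sInf (f := fun z u => f (z, u)) (by exact f.continuous)
  have key : ∀ z, ∃ u ∈ (univ : Set unitInterval),
      sInf ((fun u => f (z, u)) '' (univ : Set unitInterval)) = f (z, u) ∧
      ∀ v ∈ (univ : Set unitInterval), f (z, u) ≤ f (z, v) := fun z =>
    isCompact_univ.exists_sInf_image_eq_and_le (f := fun u => f (z, u)) univ_nonempty
      (by fun_prop)
  refine ⟨⟨_, hc⟩, fun z u => ?_, fun z => ?_⟩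
  · obtain ⟨v, -, h1, h2⟩ := key z
    exact h1.trans_le (h2 u (mem_univ _))
  · obtain ⟨v, -, h1, h2⟩ := key z
    exact ⟨v, h1⟩

lemma exists_max_param {Z : Type*} [TopologicalSpace Z] (f : C(Z × unitInterval, ℝ)) :
    ∃ m : C(Z, ℝ), (∀ z u, f (z, u) ≤ m z) ∧ ∀ z, ∃ u, m z = f (z, u) := by
  obtain ⟨m, h1, h2⟩ := exists_min_param (-f)
  refine ⟨-m, fun z u => ?_, fun z => ?_⟩
  · have := h1 z u
    simp at this ⊢
    linarith
  · obtain ⟨u, hu⟩ := h2 z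
    exact ⟨u, by simp [hu]⟩

/-- Locally finite family of functions detecting the homotopy tracks which stay in the
positivity set of a member of a partition of unity. -/
lemma exists_track_functions {J Z B : Type*} [TopologicalSpace Z] [TopologicalSpace B]
    (ρ : PartitionOfUnity J B univ) (Γ : C(Z × unitInterval, B)) :
    ∃ μ : J → C(Z, ℝ), LocallyFinite (fun j => Function.support (μ j)) ∧ (∀ j z, 0 ≤ μ j z) ∧
      (∀ j z u, μ j z ≤ ρ j (Γ (z, u))) ∧
      (∀ j z, (∀ u, 0 < ρ j (Γ (z, u))) → 0 < μ j z) := by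
  have h := fun j => exists_min_param ((ρ j).comp Γ)
  choose μ h1 h2 using h
  have hnn : ∀ j z, 0 ≤ μ j z := fun j z => by
    obtain ⟨u, hu⟩ := h2 j z
    rw [hu]
    exact ρ.nonneg j _
  refine ⟨μ, ?_, hnn, h1, fun j z h => ?_⟩
  · have hl := ρ.locallyFinite.preimage_continuous
      (g := fun z : Z => Γ (z, 0)) (by fun_prop)
    refine hl.subset fun j z hz => ?_
    have hz' : μ j z ≠ 0 := hz
    have h3 : 0 < μ j z := lt_of_le_of_ne (hnn j z) hz'.symm
    have h4 := h1 j z 0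
    simp at h4
    simp only [mem_preimage, Function.mem_support]
    linarith
  · obtain ⟨u, hu⟩ := h2 j z
    rw [hu]
    exact h u

/-- Transport in a locally trivial chart. -/
lemma exists_chart_transport {E B F : Type*} [TopologicalSpace E] [TopologicalSpace B]
    [TopologicalSpace F] (p : C(E, B)) (U : Set B)
    (φ : (U × F) ≃ₜ (p ⁻¹' U : Set E)) (hφ : ∀ (u : U) (x : F), p (φ (u, x)) = (u : B)) :
    ∃ τ : E → B → E, (∀ e, τ e (p e) = e) ∧ (∀ e b, p e ∈ U → b ∈ U → p (τ e b) = b) ∧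
      (∀ e b, ¬ (p e ∈ U ∧ b ∈ U) → τ e b = e) ∧
      ContinuousOn (fun x : E × B => τ x.1 x.2) {x | p x.1 ∈ U ∧ x.2 ∈ U} := by
  classical
  refine ⟨fun e b => if h : p e ∈ U ∧ b ∈ U then
    (φ (⟨b, h.2⟩, (φ.symm ⟨e, h.1⟩).2) : E) else e, ?_, ?_, ?_, ?_⟩
  · intro e
    by_cases h : p e ∈ U
    · have h2 : φ.symm ⟨e, h⟩ = (⟨p e, h⟩, (φ.symm ⟨e, h⟩).2) := by
        refine Prod.ext (Subtype.ext ?_) rfl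
        have := hφ (φ.symm ⟨e, h⟩).1 (φ.symm ⟨e, h⟩).2
        simpa using this.symm
      simp only [h, and_self, dif_pos]
      rw [← h2]
      simp
    · simp [h]
  · intro e b he hb
    simp only [he, hb, and_self, dif_pos]
    exact hφ _ _
  · intro e b h
    simp [h]
  · rw [continuousOn_iff_continuous_domRestrict]
    have : Continuous (fun x : {x : E × B | p x.1 ∈ U ∧ x.2 ∈ U} =>
        (φ (⟨x.1.2, x.2.2⟩, (φ.symm ⟨x.1.1, x.2.1⟩).2) : E)) := by
      fun_prop
    convert this using 1
    funext x
    have hx : p x.1.1 ∈ U ∧ x.1.2 ∈ U := x.2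
    simp only [domRestrict_apply]
    rw [dif_pos hx]

/-- Moving a lift of `α` to a lift of `β` inside one chart. -/
lemma chart_move {E B Z : Type*} [TopologicalSpace E] [TopologicalSpace B] [TopologicalSpace Z]
    (p : C(E, B)) (U C : Set B) (hU : IsOpen U) (hC : IsClosed C) (hCU : C ⊆ U) (τ : E → B → E)
    (h1 : ∀ e, τ e (p e) = e) (h2 : ∀ e b, p e ∈ U → b ∈ U → p (τ e b) = b)
    (h4 : ContinuousOn (fun x : E × B => τ x.1 x.2) {x | p x.1 ∈ U ∧ x.2 ∈ U})
    (g : Z → E) (hg : Continuous g) (β : Z → B) (hβ : Continuous β)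
    (hne : ∀ z, p (g z) ≠ β z → p (g z) ∈ C ∧ β z ∈ C) :
    Continuous (fun z => τ (g z) (β z)) ∧ ∀ z, p (τ (g z) (β z)) = β z := by
  constructor
  · rw [continuous_iff_continuousAt]
    intro z
    by_cases hz : p (g z) ∈ U ∧ β z ∈ U
    · have hopen : IsOpen {x : E × B | p x.1 ∈ U ∧ x.2 ∈ U} :=
        (hU.preimage (by fun_prop : Continuous fun x : E × B => p x.1)).inter
          (hU.preimage continuous_snd)
      have := h4.continuousAt (x := (g z, β z)) (hopen.mem_nhds hz)
      exact ContinuousAt.comp (f := fun z => (g z, β z))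
        (g := fun x : E × B => τ x.1 x.2) this (by fun_prop)
    · have hCo : IsClosed {z | p (g z) ∈ C ∧ β z ∈ C} :=
        (hC.preimage (by fun_prop : Continuous fun z => p (g z))).inter (hC.preimage hβ)
      have hev : ∀ᶠ w in 𝓝 z, τ (g w) (β w) = g w := by
        filter_upwards [hCo.isOpen_compl.mem_nhds
          (show z ∈ {z | p (g z) ∈ C ∧ β z ∈ C}ᶜ from fun h => hz ⟨hCU h.1, hCU h.2⟩)] with w hw
        have : p (g w) = β w := by
          by_contra h
          exact hw (hne w h)
        rw [← this, h1]
      exact hg.continuousAt.congr (hev.mono fun _ h => h.symm)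
  · intro z
    by_cases h : p (g z) = β z
    · rw [← h, h1]
    · exact h2 _ _ (hCU (hne z h).1) (hCU (hne z h).2)

/-- Successive transport through the charts in a list. -/
def listLift {J E B Z : Type*} (τ : J → E → B → E) (g : Z → E) (Γ : Z → ℝ → B)
    (w : J → Z → ℝ) : List J → Z → E
  | [] => g
  | j :: l => fun z => τ j (listLift τ g Γ w l z) (Γ z ((j :: l).map (fun i => w i z)).sum)

lemma listLift_filter {J E B Z : Type*} [TopologicalSpace E] [TopologicalSpace B]
    (p : C(E, B)) (τ : J → E → B → E)
    (h1 : ∀ j e, τ j e (p e) = e) (g : Z → E) (Γ : Z → ℝ → B)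
    (w : J → Z → ℝ) (hp : ∀ l z, p (listLift τ g Γ w l z) = Γ z (l.map (fun i => w i z)).sum)
    (z : Z) (P : J → Bool) (hP : ∀ j, P j = false → w j z = 0) (l : List J) :
    listLift τ g Γ w (l.filter P) z = listLift τ g Γ w l z := by
  have hs : ∀ l : List J, ((l.filter P).map (fun i => w i z)).sum =
      (l.map (fun i => w i z)).sum := by
    intro l
    induction l with
    | nil => rfl
    | cons j l ih =>
      cases h : P j
      · simp [h, ih, hP j h]
      · simp [h, ih]
  induction l with
  | nil => rfl
  | cons j l ih =>
    cases h : P j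
    · have : listLift τ g Γ w (j :: l) z = listLift τ g Γ w l z := by
        have e : Γ z ((j :: l).map (fun i => w i z)).sum = p (listLift τ g Γ w l z) := by
          rw [hp]
          simp [hP j h]
        change τ j (listLift τ g Γ w l z) (Γ z ((j :: l).map (fun i => w i z)).sum) = _
        rw [e, h1]
      rw [this, ← ih]
      simp [h]
    · have e : (j :: l).filter P = j :: l.filter P := by simp [h]
      rw [e]
      change τ j (listLift τ g Γ w (l.filter P) z)
        (Γ z ((j :: l.filter P).map (fun i => w i z)).sum) =
        τ j (listLift τ g Γ w l z) (Γ z ((j :: l).map (fun i => w i z)).sum)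
      rw [ih, ← hs (j :: l), e]

/-- Lifting the endpoint of a homotopy with small tracks. -/
lemma hurewicz_small_lift {J E B Z : Type*} [LinearOrder J]
    [TopologicalSpace E] [TopologicalSpace B] [TopologicalSpace Z]
    (p : C(E, B)) (U : J → Set B) (hU : ∀ j, IsOpen (U j))
    (ρ : PartitionOfUnity J B univ) (hρ : ρ.IsSubordinate U) (τ : J → E → B → E)
    (h1 : ∀ j e, τ j e (p e) = e) (h2 : ∀ j e b, p e ∈ U j → b ∈ U j → p (τ j e b) = b)
    (h4 : ∀ j, ContinuousOn (fun x : E × B => τ j x.1 x.2) {x | p x.1 ∈ U j ∧ x.2 ∈ U j})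
    (Γ : C(Z × unitInterval, B)) (hΓ : ∀ z, ∃ j, ∀ u, 0 < ρ j (Γ (z, u)))
    (g : C(Z, E)) (hg : ∀ z, p (g z) = Γ (z, 0)) :
    ∃ g' : C(Z, E), (∀ z, p (g' z) = Γ (z, 1)) ∧
      ∀ z, (∀ u, Γ (z, u) = Γ (z, 0)) → g' z = g z := by
  classical
  obtain ⟨μ, hlf, hnn, hle, hpos⟩ := exists_track_functions ρ Γ
  have hMc : Continuous fun z => ∑ᶠ j, μ j z :=
    continuous_finsum (fun j => (μ j).continuous) hlf
  have hfin : ∀ z, {j | μ j z ≠ 0}.Finite := fun z => hlf.point_finite z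
  have hMpos : ∀ z, 0 < ∑ᶠ j, μ j z := fun z => by
    obtain ⟨j, hj⟩ := hΓ z
    exact finsum_pos (fun j => hnn j z) ⟨j, hpos j z hj⟩ (hfin z)
  set w : J → Z → ℝ := fun j z => μ j z / ∑ᶠ j, μ j z with hw
  have hwc : ∀ j, Continuous (w j) := fun j =>
    (μ j).continuous.div hMc fun z => (hMpos z).ne'
  have hw0 : ∀ j z, w j z ≠ 0 → ∀ u, Γ (z, u) ∈ tsupport (ρ j) := by
    intro j z h u
    have hm : μ j z ≠ 0 := fun h0 => h (by simp [hw, h0])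
    have : 0 < μ j z := lt_of_le_of_ne (hnn j z) hm.symm
    exact subset_tsupport _ (this.trans_le (hle j z u)).ne'
  set Γ' : Z → ℝ → B := fun z r => Γ (z, projIcc 0 1 zero_le_one r) with hΓ'
  have hTc : ∀ l : List J, Continuous fun z => (l.map (fun i => w i z)).sum := by
    intro l
    induction l with
    | nil => simpa using continuous_const
    | cons j l ih =>
      simp only [List.map_cons, List.sum_cons]
      exact (hwc j).add ih
  have hΓc : ∀ l : List J, Continuous fun z => Γ' z (l.map (fun i => w i z)).sum := fun l =>
    Γ.continuous.comp (continuous_id.prodMk (continuous_projIcc.comp (hTc l)))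
  have main : ∀ l : List J, Continuous (listLift τ g Γ' w l) ∧
      ∀ z, p (listLift τ g Γ' w l z) = Γ' z (l.map (fun i => w i z)).sum := by
    intro l
    induction l with
    | nil =>
      refine ⟨g.continuous, fun z => ?_⟩
      have : projIcc (0:ℝ) 1 zero_le_one 0 = 0 := projIcc_left _
      simp [listLift, hΓ', hg, this]
    | cons j l ih =>
      refine chart_move p (U j) (tsupport (ρ j)) (hU j) (isClosed_tsupport _) (hρ j) (τ j)
        (h1 j) (h2 j) (h4 j) (listLift τ g Γ' w l) ih.1 _ (hΓc (j :: l)) ?_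
      intro z hne
      rw [ih.2] at hne ⊢
      have : w j z ≠ 0 := by
        intro h
        apply hne
        simp [h]
      exact ⟨hw0 j z this _, hw0 j z this _⟩
  have hsum : ∀ z, ((((hfin z).toFinset.sort (· ≤ ·))).map (fun i => w i z)).sum = 1 := by
    intro z
    have e : ((((hfin z).toFinset.sort (· ≤ ·))).map (fun i => w i z)).sum =
        ∑ j ∈ (hfin z).toFinset, w j z := by
      rw [← List.sum_toFinset _ (Finset.sort_nodup _ _), Finset.sort_toFinset]
    rw [e, hw]
    simp only
    rw [← Finset.sum_div, ← finsum_eq_sum_of_support_subset]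
    · exact div_self (hMpos z).ne'
    · intro j hj
      simpa using hj
  refine ⟨⟨fun z => listLift τ g Γ' w ((hfin z).toFinset.sort (· ≤ ·)) z, ?_⟩, ?_, ?_⟩
  · rw [continuous_iff_continuousAt]
    intro z
    obtain ⟨V, hV, hS⟩ := hlf z
    refine ((main (hS.toFinset.sort (· ≤ ·))).1.continuousAt (x := z)).congr ?_
    filter_upwards [hV] with x hx
    rw [← listLift_filter p τ h1 g Γ' w (fun l => (main l).2) x (fun j => decide (μ j x ≠ 0))
      (fun j hj => by simp at hj; simp [hw, hj])]
    congr 1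
    apply List.Perm.eq_of_pairwise' (r := (· ≤ ·))
    · exact (Finset.pairwise_sort _ _).filter _
    · exact Finset.pairwise_sort _ _
    · rw [List.perm_ext_iff_of_nodup ((Finset.sort_nodup _ _).filter _) (Finset.sort_nodup _ _)]
      intro j
      simp only [List.mem_filter, Finset.mem_sort, Finite.mem_toFinset, mem_ofPred_eq,
        decide_eq_true_eq, and_iff_right_iff_imp]
      intro hj
      exact ⟨x, hj, hx⟩
  · intro z
    have : projIcc (0:ℝ) 1 zero_le_one 1 = 1 := projIcc_right _
    simp only [ContinuousMap.coe_mk]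
    rw [(main _).2, hsum]
    simp [hΓ', this]
  · intro z hz
    have : ∀ l, listLift τ g Γ' w l z = g z := by
      intro l
      induction l with
      | nil => rfl
      | cons j l ih =>
        change τ j (listLift τ g Γ' w l z) (Γ' z ((j :: l).map (fun i => w i z)).sum) = g z
        have e : ∀ r, Γ' z r = p (g z) := fun r => by simp only [hΓ']; rw [hz, hg]
        rw [ih, e, h1]
    exact this _

/-- A continuous step size. -/
lemma exists_step {J B Y : Type*} [TopologicalSpace B] [TopologicalSpace Y]
    (ρ : PartitionOfUnity J B univ) (h : C(Y × unitInterval, B)) :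
    ∃ δ : C(Y, ℝ), (∀ y, 0 < δ y) ∧ ∀ (y : Y) (s : unitInterval), ∃ j, ∀ x : unitInterval,
      s ≤ x → (x : ℝ) ≤ s + δ y → 0 < ρ j (h (y, x)) := by
  set Γ : C(((Y × unitInterval) × unitInterval) × unitInterval, B) :=
    ⟨fun q => h (q.1.1.1, projIcc 0 1 zero_le_one ((q.1.2 : ℝ) + q.2 * q.1.1.2)), by
      refine h.continuous.comp (Continuous.prodMk (by fun_prop) (continuous_projIcc.comp ?_))
      fun_prop⟩ with hΓ
  obtain ⟨μ, hlf, hnn, hle, hpos⟩ := exists_track_functions ρ Γ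
  have hMc : Continuous fun z => ∑ᶠ j, μ j z :=
    continuous_finsum (fun j => (μ j).continuous) hlf
  have hM0 : ∀ z, 0 ≤ ∑ᶠ j, μ j z := fun z => finsum_nonneg fun j => hnn j z
  obtain ⟨N, hN1, hN2⟩ := exists_min_param ⟨_, hMc⟩
  simp only [ContinuousMap.coe_mk] at hN1 hN2
  obtain ⟨δ, hd1, hd2⟩ := exists_max_param (Z := Y)
    ⟨fun q => min (q.2 : ℝ) (N q), by fun_prop⟩
  simp only [ContinuousMap.coe_mk] at hd1 hd2
  have hN0 : ∀ y, 0 < N (y, 0) := by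
    intro y
    obtain ⟨s, hs⟩ := hN2 (y, 0)
    rw [hs]
    obtain ⟨j, hj⟩ := ρ.exists_pos (mem_univ (h (y, s)))
    refine finsum_pos (fun j => hnn j _) ⟨j, hpos j _ fun u => ?_⟩ (hlf.point_finite _)
    simpa [hΓ] using hj
  have hδ : ∀ y, 0 < δ y := by
    intro y
    have hc : Continuous fun r : ℝ => N (y, projIcc 0 1 zero_le_one r) :=
      N.continuous.comp (continuous_const.prodMk continuous_projIcc)
    have h0 : 0 < N (y, projIcc 0 1 zero_le_one 0) := by
      have : projIcc (0:ℝ) 1 zero_le_one 0 = 0 := projIcc_left _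
      rw [this]
      exact hN0 y
    have hev := hc.continuousAt.eventually (lt_mem_nhds h0)
    obtain ⟨ε, hε, hb⟩ := Metric.eventually_nhds_iff.1 hev
    have hr : 0 < min (ε / 2) 1 := by positivity
    have h3 := hb (y := min (ε / 2) 1) (by
      rw [Real.dist_eq, sub_zero, abs_of_pos hr]
      exact (min_le_left _ _).trans_lt (by linarith))
    refine lt_of_lt_of_le (lt_min ?_ h3) (hd1 y _)
    rw [projIcc_of_mem zero_le_one ⟨hr.le, min_le_right _ _⟩]
    exact hr
  refine ⟨δ, hδ, fun y s => ?_⟩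
  obtain ⟨ε, hε⟩ := hd2 y
  have hy := hδ y
  rw [hε] at hy
  have hε0 : (0:ℝ) < ε := (lt_min_iff.1 hy).1
  have hNε : 0 < N (y, ε) := (lt_min_iff.1 hy).2
  have hδε : δ y ≤ ε := hε.trans_le (min_le_left _ _)
  have hM : 0 < ∑ᶠ j, μ j ((y, ε), s) := hNε.trans_le (hN1 _ _)
  obtain ⟨j, hj⟩ : ∃ j, μ j ((y, ε), s) ≠ 0 := by
    by_contra! hcon
    simp [hcon] at hM
  have hj' : 0 < μ j ((y, ε), s) := lt_of_le_of_ne (hnn _ _) hj.symm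
  refine ⟨j, fun x hsx hx => ?_⟩
  have hsx' : (s : ℝ) ≤ x := hsx
  have hv : ((x : ℝ) - s) / ε ∈ Icc (0:ℝ) 1 :=
    ⟨div_nonneg (by linarith) hε0.le, by rw [div_le_one hε0]; linarith⟩
  have h5 := hle j ((y, ε), s) ⟨_, hv⟩
  have h6 : Γ (((y, ε), s), ⟨_, hv⟩) = h (y, x) := by
    simp only [hΓ, ContinuousMap.coe_mk]
    rw [div_mul_cancel₀ _ hε0.ne', add_sub_cancel, projIcc_val]
  rw [h6] at h5
  exact hj'.trans_le h5

lemma hlp_aux {J E B Y : Type*} [LinearOrder J]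
    [TopologicalSpace E] [TopologicalSpace B] [TopologicalSpace Y]
    (p : C(E, B)) (U : J → Set B) (hU : ∀ j, IsOpen (U j))
    (ρ : PartitionOfUnity J B univ) (hρ : ρ.IsSubordinate U) (τ : J → E → B → E)
    (h1 : ∀ j e, τ j e (p e) = e) (h2 : ∀ j e b, p e ∈ U j → b ∈ U j → p (τ j e b) = b)
    (h4 : ∀ j, ContinuousOn (fun x : E × B => τ j x.1 x.2) {x | p x.1 ∈ U j ∧ x.2 ∈ U j}) :
    HasHLP p Y := by
  intro f h hf
  obtain ⟨δ, hδ, hstep⟩ := exists_step ρ h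
  -- the time reached after `r` steps, cut off at `t`
  set a : Y × unitInterval → ℝ → unitInterval := fun z r =>
    min z.2 (projIcc 0 1 zero_le_one (r * δ z.1)) with ha
  have hac : Continuous fun q : (Y × unitInterval) × ℝ => a q.1 q.2 := by
    refine Continuous.min (by fun_prop) (continuous_projIcc.comp ?_)
    fun_prop
  have ha0 : ∀ z, a z 0 = 0 := fun z => by
    have : projIcc (0:ℝ) 1 zero_le_one 0 = 0 := projIcc_left _
    simp [ha, this]
  have hat : ∀ y r, a (y, 0) r = 0 := fun y r => by
    simp [ha]
  have ha1 : ∀ z r, 1 ≤ r * δ z.1 → a z r = z.2 := fun z r hr => by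
    have : projIcc (0:ℝ) 1 zero_le_one (r * δ z.1) = 1 := projIcc_of_right_le _ hr
    simp only [ha, this]
    exact min_eq_left unitInterval.le_one'
  have step : ∀ (i : ℕ) (g : {g : C(Y × unitInterval, E) // ∀ z, p (g z) = h (z.1, a z i)}),
      ∃ g' : {g : C(Y × unitInterval, E) // ∀ z, p (g z) = h (z.1, a z ((i + 1 : ℕ) : ℝ))},
        ∀ z, (∀ u : unitInterval, a z (i + u) = a z i) → g'.1 z = g.1 z := by
    intro i g
    set Γ : C((Y × unitInterval) × unitInterval, B) :=
      ⟨fun q : (Y × unitInterval) × unitInterval => h (q.1.1, a q.1 (i + q.2)), by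
        refine h.continuous.comp (Continuous.prodMk (by fun_prop) ?_)
        exact hac.comp (f := fun q : (Y × unitInterval) × unitInterval =>
          (q.1, (i : ℝ) + q.2)) (by fun_prop)⟩ with hΓ
    have hsmall : ∀ z, ∃ j, ∀ u, 0 < ρ j (Γ (z, u)) := by
      intro z
      obtain ⟨j, hj⟩ := hstep z.1 (a z i)
      refine ⟨j, fun u => hj _ ?_ ?_⟩
      · have : (i : ℝ) * δ z.1 ≤ (i + u) * δ z.1 :=
          mul_le_mul_of_nonneg_right (by linarith [u.2.1]) (hδ _).le
        exact min_le_min_left _ (monotone_projIcc _ this)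
      · have hd := hδ z.1
        have h5 : ((i : ℝ) + u) * δ z.1 ≤ i * δ z.1 + δ z.1 := by
          nlinarith [u.2.2]
        have hz := z.2.2.1
        have e1 : ∀ r, ((a z r : unitInterval) : ℝ) = min (z.2 : ℝ) (max 0 (min 1 (r * δ z.1))) := by
          intro r
          simp only [ha, projIcc]
          rfl
        simp only [e1]
        have h6 : 0 ≤ (i : ℝ) * δ z.1 := by positivity
        rcases le_total (z.2 : ℝ) (max 0 (min 1 (i * δ z.1))) with h7 | h7
        · rw [min_eq_left h7]
          exact (min_le_left _ _).trans (by linarith)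
        · rw [min_eq_right h7]
          refine (min_le_right _ _).trans ?_
          rw [max_eq_right (le_min zero_le_one h6)]
          refine max_le (by positivity) ?_
          rw [← min_add_add_right]
          exact min_le_min (by linarith) h5
    obtain ⟨g', hg1, hg2⟩ := hurewicz_small_lift p U hU ρ hρ τ h1 h2 h4 Γ hsmall g.1
      (fun z => by simpa [hΓ] using g.2 z)
    refine ⟨⟨g', fun z => ?_⟩, fun z hz => hg2 z fun u => ?_⟩
    · rw [hg1]
      simp [hΓ]
    · simp [hΓ, hz]
  choose next hnext using step
  let H : ∀ i : ℕ, {g : C(Y × unitInterval, E) // ∀ z, p (g z) = h (z.1, a z i)} := fun i =>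
    Nat.rec (motive := fun i : ℕ => {g : C(Y × unitInterval, E) // ∀ z, p (g z) = h (z.1, a z i)})
      ⟨⟨fun z => f z.1, by fun_prop⟩, fun z => by
        have := ha0 z
        simp [this, hf]⟩ (fun i g => next i g) i
  have Hs : ∀ (i : ℕ) z, (∀ u : unitInterval, a z (i + u) = a z i) → (H (i + 1)).1 z = (H i).1 z :=
    fun i z hz => hnext i (H i) z hz
  have H0 : ∀ i y, (H i).1 (y, 0) = f y := by
    intro i y
    induction i with
    | zero => rfl
    | succ i ih => rw [Hs i (y, 0) (fun u => by rw [hat, hat]), ih]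
  have Hst : ∀ (z : Y × unitInterval) (n m : ℕ), 1 ≤ n * δ z.1 → n ≤ m →
      (H m).1 z = (H n).1 z := by
    intro z n m hn hnm
    induction m, hnm using Nat.le_induction with
    | base => rfl
    | succ m hm ih =>
      have hd := hδ z.1
      have hm' : (n : ℝ) ≤ m := by exact_mod_cast hm
      have h5 : 1 ≤ (m : ℝ) * δ z.1 := by nlinarith
      rw [Hs m z (fun u => ?_), ih]
      rw [ha1 z _ h5, ha1 z]
      nlinarith [u.2.1]
  have hceil : ∀ y, 1 ≤ (⌈1 / δ y⌉₊ : ℝ) * δ y := fun y => by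
    rw [← div_le_iff₀ (hδ y)]
    exact Nat.le_ceil _
  refine ⟨⟨fun z => (H ⌈1 / δ z.1⌉₊).1 z, ?_⟩, fun z => ?_, fun y => H0 _ y⟩
  · rw [continuous_iff_continuousAt]
    intro z
    set N := ⌈1 / δ z.1⌉₊ + 1 with hN
    refine ((H N).1.continuous.continuousAt (x := z)).congr ?_
    have hlt : 1 < (N : ℝ) * δ z.1 := by
      have := hceil z.1
      have := hδ z.1
      rw [hN]
      push_cast
      nlinarith
    have hc : Continuous fun x : Y × unitInterval => (N : ℝ) * δ x.1 := by fun_prop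
    filter_upwards [hc.continuousAt.eventually (lt_mem_nhds hlt)] with x hx
    refine Hst x _ N (hceil x.1) ?_
    rw [Nat.ceil_le, div_le_iff₀ (hδ _)]
    exact hx.le
  · simp only [ContinuousMap.coe_mk]
    rw [(H _).2, ha1 z _ (hceil z.1)]

/-- A fibre bundle over a paracompact Hausdorff base is a fibration. -/
theorem fibreBundle_isFibration_of_paracompact_t2
    {E B : Type u} (F : Type u) [TopologicalSpace E] [TopologicalSpace B] [TopologicalSpace F]
    [ParacompactSpace B] [T2Space B]
    (p : C(E, B)) (hp : IsFibreBundleProj F p) :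
    IsFibration.{v} p := by
  intro Y _
  choose U hU hbU φ hφ using hp
  obtain ⟨ρ, hρ⟩ := PartitionOfUnity.exists_isSubordinate isClosed_univ U hU
    (fun b _ => mem_iUnion.2 ⟨b, hbU b⟩)
  choose τ h1 h2 _ h4 using fun b => exists_chart_transport p (U b) (φ b) (hφ b)
  letI : LinearOrder B := IsWellOrder.linearOrder WellOrderingRel
  exact hlp_aux p U hU ρ hρ τ h1 h2 h4
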